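/- arXiv:2101.07346 — 2 statements merged into one kernel-verified Lean document; each statement's English description precedes it below -/
import Mathlib

section
/- For every integer d ≥ 0, the ℂ-vector space of homogeneous polynomials of degree d in ℂ[x,y,z] vanishing at all 15 points of Z(H₃) has dimension C(d+2,2) − min(C(d+2,2), 15), where C(d+2,2) = (d+2)(d+1)/2. Equivalently, the h-vector of Z(H₃) is (1,2,3,4,5): the Hilbert function of ℂ[x,y,z]/I(Z(H₃)) takes the values 1, 3, 6, 10, 15, 15, 15, … in degrees 0, 1, 2, 3, 4, 5, 6, …. -/
/-!
The 15 points are the pairwise intersections of six lines in the plane, those orthogonal to the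
five-fold axes of the icosahedron: they form a star configuration. The product of the four lines
that miss one of the points is a quartic vanishing at the 14 others, so evaluation of quartics at
the 15 points is surjective; as there are 15 monomials of degree 4, it is bijective. Multiplying by
powers of a coordinate carries injectivity down to smaller degrees, surjectivity up to larger ones.
The same argument applies to the points cut out by any hyperplanes in general position.
-/

open MvPolynomial

/-- The 15 points of the `H₃` root-system configuration. -/
noncomputable def H3pts (u : ℂ) : Fin 15 → (Fin 3 → ℂ) :=
  ![![1,0,0], ![0,1,0], ![0,0,1],
    ![1,u,u^2], ![-1,u,u^2], ![1,-u,u^2], ![1,u,-u^2],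
    ![u,-u^2,1], ![-u,u^2,1], ![u,u^2,-1], ![u,u^2,1],
    ![u^2,1,-u], ![u^2,-1,u], ![-u^2,1,u], ![u^2,1,u]]

/-- The `ℂ`-vector space of homogeneous polynomials of degree `d` in `ℂ[x,y,z]`
vanishing at all 15 points of `Z(H₃)`. -/
noncomputable def H3V (u : ℂ) (d : ℕ) : Submodule ℂ (MvPolynomial (Fin 3) ℂ) :=
  homogeneousSubmodule (Fin 3) ℂ d ⊓
    ⨅ i : Fin 15, LinearMap.ker (aeval (R := ℂ) (H3pts u i)).toLinearMap

section LinearMap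

variable {K V W : Type*} [DivisionRing K] [AddCommGroup V] [Module K V] [FiniteDimensional K V]
  [AddCommGroup W] [Module K W]

lemma finrank_ker_eq_sub_min_of_injective_or_surjective [FiniteDimensional K W] {f : V →ₗ[K] W}
    (hf : Function.Injective f ∨ Function.Surjective f) :
    Module.finrank K (LinearMap.ker f) =
      Module.finrank K V - min (Module.finrank K V) (Module.finrank K W) := by
  rcases hf with hinj | hsurj
  · have hle := LinearMap.finrank_le_finrank_of_injective hinj
    rw [LinearMap.ker_eq_bot.2 hinj, finrank_bot]
    omega
  · have hadd := LinearMap.finrank_range_add_finrank_ker f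
    rw [LinearMap.range_eq_top.2 hsurj, finrank_top] at hadd
    omega

end LinearMap

lemma multichoose_add_one_sub {r s : ℕ} (hr : 0 < r) (hrs : r ≤ s + 1) :
    r.multichoose (s + 1 - r) = s.choose (r - 1) := by
  rw [Nat.multichoose_eq, Nat.add_sub_cancel' hrs, Nat.add_sub_cancel]
  exact Nat.choose_symm_of_eq_add (by omega)

instance finite_homogeneousSubmodule (σ R : Type*) [Finite σ] [CommSemiring R] (d : ℕ) :
    Module.Finite R (homogeneousSubmodule σ R d) :=
  Module.Finite.iff_fg.2 (homogeneousSubmodule_fg σ R d)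

lemma finrank_homogeneousSubmodule (σ R : Type*) [Fintype σ] [CommSemiring R]
    [StrongRankCondition R] (d : ℕ) :
    Module.finrank R (homogeneousSubmodule σ R d) = (Fintype.card σ).multichoose d := by
  classical
  have hexponents : {e : σ →₀ ℕ | e.degree = d} =
      (Finset.finsuppAntidiag Finset.univ d : Finset (σ →₀ ℕ)) := by
    ext e
    simp [Finset.mem_finsuppAntidiag, Finsupp.degree_eq_sum]
  rw [homogeneousSubmodule_eq_finsupp_supported, hexponents,
    (AddMonoidAlgebra.supportedEquivFinsupp _).finrank_eq, Module.finrank_finsupp_self,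
    ← Nat.card_eq_fintype_card, Nat.card_coe_set_eq, Set.ncard_coe_finset,
    Finset.card_finsuppAntidiag_nat_eq_multichoose, Finset.card_univ]

section Evaluation

variable {R K σ ι : Type*}

/-- Evaluation of forms of degree `d` at a family of points. The points are given by
representatives in affine space, so only the vanishing of a value has a projective meaning. -/
noncomputable def evalForms [CommSemiring R] (p : ι → σ → R) (d : ℕ) :
    homogeneousSubmodule σ R d →ₗ[R] ι → R :=
  (LinearMap.pi fun i => (aeval (R := R) (p i)).toLinearMap).domRestrict _

@[simp]
lemma evalForms_apply [CommSemiring R] (p : ι → σ → R) (d : ℕ)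
    (f : homogeneousSubmodule σ R d) (i : ι) :
    evalForms p d f i = eval (p i) (f : MvPolynomial σ R) :=
  RingHom.congr_fun (coe_aeval_eq_eval (p i)) _

lemma map_subtype_ker_evalForms [CommSemiring R] (p : ι → σ → R) (d : ℕ) :
    (LinearMap.ker (evalForms p d)).map (Submodule.subtype _) =
      homogeneousSubmodule σ R d ⊓ ⨅ i, LinearMap.ker (aeval (R := R) (p i)).toLinearMap := by
  rw [evalForms, LinearMap.ker_domRestrict, Submodule.map_comap_subtype, LinearMap.ker_pi]

lemma evalForms_injective_of_le [CommRing R] [IsDomain R] [Nonempty σ] {p : ι → σ → R} {d m : ℕ}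
    (hdm : d ≤ m) (hm : Function.Injective (evalForms p m)) :
    Function.Injective (evalForms p d) := by
  obtain ⟨c⟩ := ‹Nonempty σ›
  rw [injective_iff_map_eq_zero] at hm ⊢
  intro f hf
  have hmul : ((f : MvPolynomial σ R) * X c ^ (m - d)).IsHomogeneous m := by
    simpa [hdm] using f.2.mul (isHomogeneous_X_pow c (m - d))
  have hvanish : evalForms p m ⟨_, hmul⟩ = 0 := by
    ext i
    have hfi : eval (p i) (f : MvPolynomial σ R) = 0 := by rw [← evalForms_apply, hf, Pi.zero_apply]
    simp [hfi]
  have hzero : ((f : MvPolynomial σ R) * X c ^ (m - d)) = 0 := congrArg Subtype.val (hm _ hvanish)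
  exact Subtype.ext ((mul_eq_zero_iff_right (pow_ne_zero _ (X_ne_zero c))).1 hzero)

lemma evalForms_surjective_of_separators [Field K] [Finite ι] {p : ι → σ → K} {d : ℕ}
    {f : ι → MvPolynomial σ K} (hf : ∀ i, (f i).IsHomogeneous d)
    (hsep : ∀ i j, eval (p j) (f i) = 0 ↔ i ≠ j) :
    Function.Surjective (evalForms p d) := by
  classical
  have := Fintype.ofFinite ι
  intro y
  refine ⟨∑ i, (y i / eval (p i) (f i)) • ⟨f i, hf i⟩, ?_⟩
  ext j
  have hj : eval (p j) (f j) ≠ 0 := fun h => (hsep j j).1 h rfl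
  rw [map_sum, Finset.sum_apply, Finset.sum_eq_single j]
  · simp [hj]
  · intro i _ hij
    simp [(hsep i j).2 hij]
  · simp

lemma evalForms_surjective_of_le [Field K] [Finite ι] {p : ι → σ → K} (hp : ∀ i, p i ≠ 0) {m d : ℕ}
    (hmd : m ≤ d) (hm : Function.Surjective (evalForms p m)) :
    Function.Surjective (evalForms p d) := by
  classical
  choose c hc using fun i => Function.ne_iff.1 (hp i)
  choose f hf using fun i => hm (Pi.single i 1)
  have heval (i j : ι) :
      eval (p j) (f i : MvPolynomial σ K) = Pi.single (M := fun _ => K) i 1 j := by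
    rw [← hf, evalForms_apply]
  refine evalForms_surjective_of_separators
    (f := fun i => (f i : MvPolynomial σ K) * X (c i) ^ (d - m)) (fun i => ?_) fun i j => ?_
  · simpa [hmd] using (f i).2.mul (isHomogeneous_X_pow (c i) (d - m))
  · rw [map_mul, heval]
    rcases eq_or_ne i j with rfl | hij
    · simpa using fun h => absurd h (hc i)
    · simp [hij]

theorem finrank_ker_evalForms_of_bijective [Field K] [Fintype ι] [Fintype σ] [Nonempty σ]
    {p : ι → σ → K} (hp : ∀ i, p i ≠ 0) {m : ℕ} (hm : Function.Bijective (evalForms p m))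
    (d : ℕ) :
    Module.finrank K (LinearMap.ker (evalForms p d)) =
      (Fintype.card σ).multichoose d -
        min ((Fintype.card σ).multichoose d) (Fintype.card ι) := by
  have hrank : Function.Injective (evalForms p d) ∨ Function.Surjective (evalForms p d) :=
    (le_total d m).imp (evalForms_injective_of_le · hm.1) (evalForms_surjective_of_le hp · hm.2)
  rw [finrank_ker_eq_sub_min_of_injective_or_surjective hrank, finrank_homogeneousSubmodule,
    Module.finrank_fintype_fun_eq_card]

end Evaluation

/-- The rows of `L` are hyperplanes in the projective space with homogeneous coordinates `σ`, of
dimension `card σ - 1`, and the `p i` are the points where that many of them meet. The set `S i`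
lists the hyperplanes through `p i`; every set of the right size occurs exactly once. -/
structure IsStarConfiguration {K σ κ ι : Type*} [CommSemiring K] [Fintype σ] (L : Matrix κ σ K)
    (S : ι → Finset κ) (p : ι → σ → K) : Prop where
  ne_zero (i : ι) : p i ≠ 0
  mulVec_eq_zero_iff (i : ι) (k : κ) : L.mulVec (p i) k = 0 ↔ k ∈ S i
  injective : Function.Injective S
  mem_range_iff (T : Finset κ) : T ∈ Set.range S ↔ T.card + 1 = Fintype.card σ

namespace IsStarConfiguration

variable {K σ κ ι : Type*} [Field K] [Fintype σ] {L : Matrix κ σ K} {S : ι → Finset κ}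
  {p : ι → σ → K}

lemma card_add_one (h : IsStarConfiguration L S p) (i : ι) : (S i).card + 1 = Fintype.card σ :=
  (h.mem_range_iff _).1 ⟨i, rfl⟩

lemma eq_of_subset (h : IsStarConfiguration L S p) {i j : ι} (hij : S i ⊆ S j) : i = j := by
  have hcard := (h.card_add_one j).trans (h.card_add_one i).symm
  exact h.injective (Finset.eq_of_subset_of_card_le hij (Nat.add_right_cancel hcard).le)

lemma card_eq_choose [Fintype κ] [Fintype ι] [Nonempty ι] (h : IsStarConfiguration L S p) :
    Fintype.card ι = (Fintype.card κ).choose (Fintype.card σ - 1) := by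
  classical
  have himage : Finset.univ.image S = Finset.univ.powersetCard (Fintype.card σ - 1) := by
    ext T
    have hcard := h.card_add_one (Classical.arbitrary ι)
    have hT := h.mem_range_iff T
    simp only [Set.mem_range] at hT
    simp only [Finset.mem_image, Finset.mem_univ, true_and, Finset.mem_powersetCard_univ, hT]
    omega
  rw [← Finset.card_univ, ← Finset.card_image_of_injective _ h.injective, himage,
    Finset.card_powersetCard, Finset.card_univ]

lemma evalForms_surjective [Fintype κ] [Finite ι] (h : IsStarConfiguration L S p) :
    Function.Surjective (evalForms p (Fintype.card κ + 1 - Fintype.card σ)) := by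
  classical
  refine evalForms_surjective_of_separators (f := fun i => ∏ k ∈ (S i)ᶜ, L.toMvPolynomial k)
    (fun i => ?_) fun i j => ?_
  · have hdeg : ∑ _k ∈ (S i)ᶜ, 1 = Fintype.card κ + 1 - Fintype.card σ := by
      rw [← h.card_add_one i, Finset.sum_const, Finset.card_compl, smul_eq_mul, mul_one,
        Nat.add_sub_add_right]
    exact hdeg ▸ IsHomogeneous.prod _ _ _ fun k _ => L.toMvPolynomial_isHomogeneous k
  · calc eval (p j) (∏ k ∈ (S i)ᶜ, L.toMvPolynomial k) = 0
        ↔ ∃ k ∈ (S i)ᶜ, k ∈ S j := by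
          simp only [map_prod, Finset.prod_eq_zero_iff, Matrix.toMvPolynomial_eval_eq_apply,
            h.mulVec_eq_zero_iff]
      _ ↔ ¬ S j ⊆ S i := by simp [Finset.not_subset, and_comm]
      _ ↔ i ≠ j := not_congr ⟨fun hji => (h.eq_of_subset hji).symm, fun hij => hij ▸ subset_rfl⟩

lemma evalForms_bijective [Fintype κ] [Finite ι] [Nonempty ι] (h : IsStarConfiguration L S p) :
    Function.Bijective (evalForms p (Fintype.card κ + 1 - Fintype.card σ)) := by
  have := Fintype.ofFinite ι
  have hcard := h.card_add_one (Classical.arbitrary ι)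
  have hle := (S (Classical.arbitrary ι)).card_le_univ
  have hdim : Module.finrank K
      (homogeneousSubmodule σ K (Fintype.card κ + 1 - Fintype.card σ)) =
      Module.finrank K (ι → K) := by
    rw [finrank_homogeneousSubmodule, Module.finrank_fintype_fun_eq_card, h.card_eq_choose,
      multichoose_add_one_sub (by omega) (by omega)]
  exact ⟨(LinearMap.injective_iff_surjective_of_finrank_eq_finrank hdim).2 h.evalForms_surjective,
    h.evalForms_surjective⟩

theorem finrank_ker_evalForms [Finite κ] [Fintype ι] [Nonempty ι]
    (h : IsStarConfiguration L S p) (d : ℕ) :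
    Module.finrank K (LinearMap.ker (evalForms p d)) =
      (Fintype.card σ).multichoose d -
        min ((Fintype.card σ).multichoose d) (Fintype.card ι) := by
  have := Fintype.ofFinite κ
  have : Nonempty σ := (Function.ne_iff.1 (h.ne_zero (Classical.arbitrary ι))).nonempty
  exact finrank_ker_evalForms_of_bijective h.ne_zero h.evalForms_bijective d

end IsStarConfiguration

/-- The six lines whose pairwise intersections are the points `H3pts u`: for `u` the golden ratio,
the rows are the directions of the five-fold axes of the icosahedron. -/
def H3lines (u : ℂ) : Matrix (Fin 6) (Fin 3) ℂ :=
  !![0, u, -1; 0, u, 1; 1, 0, -u; 1, 0, u; u, -1, 0; u, 1, 0]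

/-- The indices of the two lines of `H3lines` that pass through each of the points `H3pts`. -/
def H3linesThrough : Fin 15 → Finset (Fin 6) :=
  ![{0, 1}, {2, 3}, {4, 5},
    {0, 4}, {0, 5}, {1, 5}, {1, 4},
    {2, 5}, {3, 5}, {3, 4}, {2, 4},
    {1, 3}, {1, 2}, {0, 3}, {0, 2}]

-- Reduced by `u ^ 3 = 2 * u + 1`, so that every other entry than `0` is a nonzero integer times a
-- power of `u`, which shows which points lie on which lines.
lemma H3lines_mulVec_H3pts {u : ℂ} (hu : u ^ 2 = u + 1) (i : Fin 15) :
    (H3lines u).mulVec (H3pts u i) =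
      !![0, 0, 1, 1, u, u;
        u, u, 0, 0, -1, 1;
        -1, 1, -u, u, 0, 0;
        0, 2 * u ^ 2, -2 * u, 2 * u ^ 2, 0, 2 * u;
        0, 2 * u ^ 2, -2 * u ^ 2, 2 * u, -2 * u, 0;
        -2 * u ^ 2, 0, -2 * u, 2 * u ^ 2, 2 * u, 0;
        2 * u ^ 2, 0, 2 * u ^ 2, -2 * u, 0, 2 * u;
        -2 * u ^ 2, -2 * u, 0, 2 * u, 2 * u ^ 2, 0;
        2 * u, 2 * u ^ 2, -2 * u, 0, -2 * u ^ 2, 0;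
        2 * u ^ 2, 2 * u, 2 * u, 0, 0, 2 * u ^ 2;
        2 * u, 2 * u ^ 2, 0, 2 * u, 0, 2 * u ^ 2;
        2 * u, 0, 2 * u ^ 2, 0, 2 * u, 2 * u ^ 2;
        -2 * u, 0, 0, 2 * u ^ 2, 2 * u ^ 2, 2 * u;
        0, 2 * u, -2 * u ^ 2, 0, -2 * u ^ 2, -2 * u;
        0, 2 * u, 0, 2 * u ^ 2, 2 * u, 2 * u ^ 2] i := by
  ext k
  fin_cases i <;> fin_cases k <;>
    simp only [H3lines, H3pts, Matrix.mulVec, dotProduct, Fin.sum_univ_three, Matrix.of_apply,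
      Matrix.cons_val, Fin.mk_one, Fin.zero_eta, Fin.reduceFinMk, Fin.isValue] <;> grind

lemma H3pts_isStarConfiguration {u : ℂ} (hu : u ^ 2 = u + 1) :
    IsStarConfiguration (H3lines u) H3linesThrough (H3pts u) where
  ne_zero i := by
    fin_cases i <;> simp [H3pts]
  mulVec_eq_zero_iff i k := by
    have hu0 : u ≠ 0 := by
      rintro rfl
      norm_num at hu
    rw [H3lines_mulVec_H3pts hu]
    fin_cases i <;> fin_cases k <;> simp [H3linesThrough, hu0]
  injective := by decide
  mem_range_iff := by decide

lemma finrank_H3V (u : ℂ) (d : ℕ) :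
    Module.finrank ℂ (H3V u d) = Module.finrank ℂ (LinearMap.ker (evalForms (H3pts u) d)) := by
  rw [H3V, ← map_subtype_ker_evalForms, Submodule.finrank_map_subtype_eq]

/-- For every degree `d`, the space of homogeneous degree-`d` polynomials vanishing at the
15 points of `Z(H₃)` has dimension `C(d+2,2) − min (C(d+2,2)) 15`; equivalently, the
`h`-vector of `Z(H₃)` is `(1,2,3,4,5)`. -/
theorem H3_hilbert_function (u : ℂ) (hu : u ^ 2 = u + 1) (d : ℕ) :
    Module.finrank ℂ (H3V u d) =
      Nat.choose (d + 2) 2 - min (Nat.choose (d + 2) 2) 15 := by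
  have hmonomials : (Fintype.card (Fin 3)).multichoose d = Nat.choose (d + 2) 2 :=
    multichoose_add_one_sub three_pos (Nat.le_add_left 3 d)
  rw [finrank_H3V, (H3pts_isStarConfiguration hu).finrank_ker_evalForms d, hmonomials,
    Fintype.card_fin]
end

section
/- The ℂ-vector space of homogeneous polynomials of degree m+2 in ℂ[x,y,z] vanishing at all 3m+3 points of Z(F_{m,3}) has dimension m(m+1)/2 + 3; moreover it is spanned by G_x, G_y, G_z together with the polynomials xyz·μ, where μ ranges over all monomials of degree m−1 in x, y, z. -/
open MvPolynomial

/-- `G_x = yz(yᵐ − (−z)ᵐ)`. -/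
noncomputable def Gx (m : ℕ) : MvPolynomial (Fin 3) ℂ :=
  X 1 * X 2 * ((X 1) ^ m - (-(X 2)) ^ m)

/-- `G_y = zx(zᵐ − (−x)ᵐ)`. -/
noncomputable def Gy (m : ℕ) : MvPolynomial (Fin 3) ℂ :=
  X 2 * X 0 * ((X 2) ^ m - (-(X 0)) ^ m)

/-- `G_z = xy(xᵐ − (−y)ᵐ)`. -/
noncomputable def Gz (m : ℕ) : MvPolynomial (Fin 3) ℂ :=
  X 0 * X 1 * ((X 0) ^ m - (-(X 1)) ^ m)

/-- The augmented Fermat configuration `Z(F_{m,3})` of `3m+3` points. -/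
def Zm3 (m : ℕ) : Set (Fin 3 → ℂ) :=
  {![1,0,0], ![0,1,0], ![0,0,1]} ∪
    {v | ∃ l : ℂ, l ^ m = (-1) ^ m ∧ (v = ![1,l,0] ∨ v = ![0,1,l] ∨ v = ![l,0,1])}

/-- The `ℂ`-vector space of homogeneous polynomials of degree `m+2` in `ℂ[x,y,z]`
vanishing at all `3m+3` points of `Z(F_{m,3})`. -/
noncomputable def Vm3 (m : ℕ) : Submodule ℂ (MvPolynomial (Fin 3) ℂ) :=
  homogeneousSubmodule (Fin 3) ℂ (m + 2) ⊓
    ⨅ v ∈ Zm3 m, LinearMap.ker (aeval (R := ℂ) v).toLinearMap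

/-!
Restrict a form of degree `m + 2` that vanishes on the configuration to an edge of the coordinate
triangle. In an affine parameter `t` the top coefficient is the value at a vertex, so the
restriction has degree at most `m + 1`; it vanishes at `0` and at the `m` solutions of
`t ^ m = (-1) ^ m`, hence is a multiple of `t (1 - (-t) ^ m)`. Each of `G_x`, `G_y`, `G_z` restricts
to this polynomial on one edge and to zero on the other two, so subtracting a unique combination of
them leaves a form that vanishes on the whole triangle. A form vanishes on the triangle exactly when
each of its monomials involves all three variables, that is, when it is a multiple of `xyz`.
-/

open scoped Polynomial

section EdgeRestriction

variable {σ R : Type*} [DecidableEq σ] [CommSemiring R]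

/-- The point `e_i + t e_j` of the coordinate line through `e_i` and `e_j`. -/
def edgePoint (i j : σ) (t : R) : σ → R := Pi.single i 1 + Pi.single j t

/-- Restriction of a polynomial to the coordinate line through `e_i` and `e_j`, written in the
affine parameter `t` of `edgePoint i j t`. -/
noncomputable def edgeRestriction (i j : σ) : MvPolynomial σ R →ₐ[R] R[X] :=
  aeval (edgePoint i j Polynomial.X)

lemma eval_edgeRestriction (i j : σ) (t : R) (f : MvPolynomial σ R) :
    (edgeRestriction i j f).eval t = aeval (edgePoint i j t) f := by
  have hpoint : (fun k ↦ Polynomial.aeval t (edgePoint i j (Polynomial.X : R[X]) k)) =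
      edgePoint i j t := by
    ext k
    simp [edgePoint, Pi.single_apply, apply_ite (Polynomial.eval t)]
  rw [← Polynomial.coe_aeval_eq_eval, ← hpoint]
  exact comp_aeval_apply _ (Polynomial.aeval t) f

lemma edgeRestriction_monomial_of_subset {i j : σ} (hij : i ≠ j) {d : σ →₀ ℕ}
    (hd : d.support ⊆ {i, j}) (c : R) :
    edgeRestriction i j (monomial d c) = Polynomial.monomial (d j) c := by
  rw [edgeRestriction, aeval_monomial, Finsupp.prod_of_support_subset _ hd _ (by simp),
    Finset.prod_pair hij]
  simp [edgePoint, hij, hij.symm, Polynomial.C_mul_X_pow_eq_monomial]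

lemma edgeRestriction_monomial_of_not_subset {i j : σ} {d : σ →₀ ℕ}
    (hd : ¬ d.support ⊆ {i, j}) (c : R) : edgeRestriction i j (monomial d c) = 0 := by
  obtain ⟨k, hk, hkij⟩ := Finset.not_subset.mp hd
  have hki : k ≠ i := by rintro rfl; simp at hkij
  have hkj : k ≠ j := by rintro rfl; simp at hkij
  rw [edgeRestriction, aeval_monomial, Finsupp.prod, Finset.prod_eq_zero hk, mul_zero]
  simp [edgePoint, hki, hkj, Finsupp.mem_support_iff.mp hk]

lemma eq_of_support_subset_pair {i j : σ} {d e : σ →₀ ℕ} (hd : d.support ⊆ {i, j})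
    (he : e.support ⊆ {i, j}) (hdeg : d.degree = e.degree) (hj : d j = e j) : d = e := by
  have hother : ∀ k ≠ i, d k = e k := fun k hki ↦ by
    by_cases hkj : k = j
    · rw [hkj, hj]
    · rw [Finsupp.notMem_support_iff.mp fun h ↦ by simpa [hki, hkj] using hd h,
        Finsupp.notMem_support_iff.mp fun h ↦ by simpa [hki, hkj] using he h]
  have hi : d i = e i := by
    by_cases hij : i = j
    · rw [hij, hj]
    · rw [Finsupp.degree_apply, Finsupp.degree_apply, Finset.sum_subset hd (by simp),
        Finset.sum_subset he (by simp), Finset.sum_pair hij, Finset.sum_pair hij, hj] at hdeg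
      exact Nat.add_right_cancel hdeg
  ext k
  by_cases hki : k = i
  · rw [hki, hi]
  · exact hother k hki

lemma coeff_edgeRestriction {i j : σ} (hij : i ≠ j) {f : MvPolynomial σ R} {n : ℕ}
    (hf : f.IsHomogeneous n) {d : σ →₀ ℕ} (hdeg : d.degree = n) (hd : d.support ⊆ {i, j}) :
    (edgeRestriction i j f).coeff (d j) = coeff d f := by
  conv_lhs => rw [f.as_sum, map_sum, Polynomial.finsetSum_coeff]
  rw [Finset.sum_eq_single d]
  · rw [edgeRestriction_monomial_of_subset hij hd, Polynomial.coeff_monomial_same]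
  · intro e he hed
    by_cases hsub : e.support ⊆ {i, j}
    · rw [edgeRestriction_monomial_of_subset hij hsub, Polynomial.coeff_monomial_of_ne]
      intro hej
      have hedeg : e.degree = n := not_ne_iff.mp (mt hf.coeff_eq_zero (mem_support_iff.mp he))
      exact hed (eq_of_support_subset_pair hsub hd (hedeg.trans hdeg.symm) hej.symm)
    · rw [edgeRestriction_monomial_of_not_subset hsub, Polynomial.coeff_zero]
  · intro hd'
    rw [notMem_support_iff.mp hd', monomial_zero, map_zero, Polynomial.coeff_zero]

lemma coeff_edgeRestriction_self {i j : σ} (hij : i ≠ j) {f : MvPolynomial σ R} {n : ℕ}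
    (hf : f.IsHomogeneous n) :
    (edgeRestriction i j f).coeff n = aeval (Pi.single j 1 : σ → R) f := by
  have hdeg : (Finsupp.single j n).degree = n := Finsupp.degree_single j n
  have hsupp : (Finsupp.single j n).support ⊆ {j} := Finsupp.support_single_subset
  calc (edgeRestriction i j f).coeff n
      = coeff (Finsupp.single j n) f := by
        simpa using coeff_edgeRestriction hij hf hdeg (hsupp.trans (by simp))
    _ = (edgeRestriction j i f).coeff 0 := by
        simpa [hij] using (coeff_edgeRestriction hij.symm hf hdeg (hsupp.trans (by simp))).symm
    _ = aeval (Pi.single j 1 : σ → R) f := by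
        rw [Polynomial.coeff_zero_eq_eval_zero, eval_edgeRestriction]
        simp [edgePoint]

lemma natDegree_edgeRestriction_le (i j : σ) {f : MvPolynomial σ R} {n : ℕ}
    (hf : f.IsHomogeneous n) : (edgeRestriction i j f).natDegree ≤ n := by
  have hpoint : ∀ k, (edgePoint i j (Polynomial.X : R[X]) k).natDegree ≤ 1 := fun k ↦ by
    rw [edgePoint, Pi.add_apply, Pi.single_apply, Pi.single_apply]
    refine Polynomial.natDegree_add_le_of_degree_le ?_ ?_ <;> split_ifs <;>
      simp [Polynomial.natDegree_X_le]
  exact (aeval_natDegree_le f hf.totalDegree_le _ hpoint).trans_eq (mul_one n)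

lemma natDegree_edgeRestriction_le_of_aeval_single_eq_zero {i j : σ} (hij : i ≠ j)
    {f : MvPolynomial σ R} {n : ℕ} (hf : f.IsHomogeneous (n + 1))
    (hj : aeval (Pi.single j 1 : σ → R) f = 0) : (edgeRestriction i j f).natDegree ≤ n :=
  Polynomial.natDegree_le_pred (natDegree_edgeRestriction_le i j hf)
    ((coeff_edgeRestriction_self hij hf).trans hj)

lemma edgeRestriction_eq_zero_iff {i j : σ} (hij : i ≠ j) {f : MvPolynomial σ R} {n : ℕ}
    (hf : f.IsHomogeneous n) :
    edgeRestriction i j f = 0 ↔ ∀ d ∈ f.support, ¬ d.support ⊆ {i, j} := by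
  constructor
  · intro h d hd hsub
    have hcoeff := mem_support_iff.mp hd
    have hdeg : d.degree = n := not_ne_iff.mp (mt hf.coeff_eq_zero hcoeff)
    exact hcoeff (by rw [← coeff_edgeRestriction hij hf hdeg hsub, h, Polynomial.coeff_zero])
  · intro h
    rw [f.as_sum, map_sum]
    exact Finset.sum_eq_zero fun d hd ↦ edgeRestriction_monomial_of_not_subset (h d hd) _

end EdgeRestriction

section UnivariateRoots

variable {R : Type*} [CommRing R] {K : Type*} [Field K]

lemma exists_eq_smul_of_splits_of_nodup_roots {p q : K[X]} (hq0 : q ≠ 0) (hq : q.Splits)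
    (hnodup : q.roots.Nodup) (hdeg : p.natDegree ≤ q.natDegree)
    (hroot : ∀ t, q.IsRoot t → p.IsRoot t) : ∃ c : K, p = c • q := by
  rcases eq_or_ne p 0 with rfl | hp0
  · exact ⟨0, by simp⟩
  have hroots : q.roots ≤ p.roots := (Multiset.le_iff_subset hnodup).mpr fun t ht ↦
    (Polynomial.mem_roots hp0).mpr (hroot t ((Polynomial.mem_roots hq0).mp ht))
  obtain ⟨b, rfl⟩ := hq.dvd_of_roots_le_roots hq0 hroots
  have hb : b.natDegree = 0 := by
    rw [Polynomial.natDegree_mul hq0 (right_ne_zero_of_mul hp0)] at hdeg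
    omega
  exact ⟨b.coeff 0, by
    rw [Polynomial.smul_eq_C_mul, ← Polynomial.eq_C_of_natDegree_eq_zero hb, mul_comm]⟩

/-- The common restriction `t (1 - (-t)^m)` of the forms `fermatForm K m i` to their edges; its
roots are the parameters of the points of the Fermat configuration on such an edge. -/
noncomputable def fermatEdge (R : Type*) [CommRing R] (m : ℕ) : R[X] :=
  Polynomial.X * (1 - (-Polynomial.X) ^ m)

lemma fermatEdge_eq (m : ℕ) : fermatEdge R m = Polynomial.C (-(-1) ^ m) *
    (Polynomial.X * (Polynomial.X ^ m - Polynomial.C ((-1) ^ m))) := by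
  have hsq : ((-1 : R[X]) ^ m) * (-1) ^ m = 1 := by rw [← mul_pow]; simp
  rw [fermatEdge, neg_pow]
  simp only [map_neg, map_pow, map_one]
  linear_combination -Polynomial.X * hsq

lemma isRoot_fermatEdge_iff [IsDomain R] {m : ℕ} {t : R} :
    (fermatEdge R m).IsRoot t ↔ t = 0 ∨ t ^ m = (-1) ^ m := by
  simp [fermatEdge_eq, Polynomial.IsRoot, sub_eq_zero]

lemma natDegree_fermatEdge [IsDomain R] {m : ℕ} (hm : m ≠ 0) :
    (fermatEdge R m).natDegree = m + 1 := by
  rw [fermatEdge_eq, Polynomial.natDegree_C_mul (by simp), Polynomial.natDegree_X_mul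
    (Polynomial.X_pow_sub_C_ne_zero hm.bot_lt _), Polynomial.natDegree_X_pow_sub_C]

lemma fermatEdge_ne_zero [IsDomain R] {m : ℕ} (hm : m ≠ 0) : fermatEdge R m ≠ 0 :=
  Polynomial.ne_zero_of_natDegree_gt (m.lt_succ_self.trans_eq (natDegree_fermatEdge hm).symm)

lemma splits_fermatEdge {m : ℕ} {ζ : K} (hζ : IsPrimitiveRoot ζ m) : (fermatEdge K m).Splits := by
  rw [fermatEdge_eq]
  exact (Polynomial.Splits.C _).mul
    (Polynomial.Splits.X.mul (X_pow_sub_C_splits_of_isPrimitiveRoot hζ rfl))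

lemma nodup_roots_fermatEdge {m : ℕ} (hm : m ≠ 0) {ζ : K} (hζ : IsPrimitiveRoot ζ m) :
    (fermatEdge K m).roots.Nodup := by
  have : NeZero m := ⟨hm⟩
  have hmK : (m : K) ≠ 0 := hζ.neZero'.out
  have hne : (Polynomial.X ^ m - Polynomial.C ((-1) ^ m) : K[X]) ≠ 0 :=
    Polynomial.X_pow_sub_C_ne_zero hm.bot_lt _
  rw [fermatEdge_eq, Polynomial.roots_C_mul _ (by simp),
    Polynomial.roots_mul (mul_ne_zero Polynomial.X_ne_zero hne), Polynomial.roots_X,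
    Multiset.singleton_add, Multiset.nodup_cons]
  refine ⟨?_, Polynomial.nodup_roots (Polynomial.separable_X_pow_sub_C _ hmK (by simp))⟩
  simp [hm]

end UnivariateRoots

section Monomials

variable {σ : Type*} [Fintype σ]

lemma setOf_degree_eq_and_forall_ne_zero (n : ℕ) :
    {d : σ →₀ ℕ | d.degree = n + Fintype.card σ ∧ ∀ i, d i ≠ 0} =
      ((∑ i, Finsupp.single i 1) + ·) '' {d | d.degree = n} := by
  classical
  have hone : ∀ k : σ, (∑ i, Finsupp.single i 1 : σ →₀ ℕ) k = 1 := fun k ↦ by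
    simp [Finsupp.finsetSum_apply, Finsupp.single_apply]
  ext d
  simp only [Set.mem_ofPred_eq, Set.mem_image]
  constructor
  · rintro ⟨hdeg, hpos⟩
    have hle : ∑ i, Finsupp.single i 1 ≤ d := fun k ↦ by
      rw [hone]
      exact Nat.one_le_iff_ne_zero.mpr (hpos k)
    obtain ⟨e, rfl⟩ := exists_add_of_le hle
    refine ⟨e, ?_, rfl⟩
    simp at hdeg
    omega
  · rintro ⟨e, rfl, rfl⟩
    exact ⟨by simp [add_comm], fun i ↦ by simp⟩

lemma ncard_setOf_degree_eq (n : ℕ) :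
    {d : σ →₀ ℕ | d.degree = n}.ncard = (Fintype.card σ).multichoose n := by
  classical
  have : {d : σ →₀ ℕ | d.degree = n} =
      (Finset.finsuppAntidiag Finset.univ n : Finset (σ →₀ ℕ)) := by
    ext d
    simp [Finsupp.degree_eq_sum]
  rw [this, Set.ncard_coe_finset, Finset.card_finsuppAntidiag_nat_eq_multichoose,
    Finset.card_univ]

lemma multichoose_three (n : ℕ) : Nat.multichoose 3 n = (n + 1) * (n + 2) / 2 := by
  have hadd : 3 + n - 1 = n + 2 := by omega
  rw [Nat.multichoose_eq, hadd, Nat.choose_symm_add, Nat.choose_two_right, mul_comm]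
  rfl

lemma finrank_restrictSupport (R : Type*) [CommRing R] [Nontrivial R] {τ : Type*}
    (s : Set (τ →₀ ℕ)) : Module.finrank R (restrictSupport R s) = s.ncard := by
  rw [Module.finrank_eq_nat_card_basis (basisRestrictSupport R s), Nat.card_coe_set_eq]

lemma finrank_restrictSupport_degree_eq_and_forall_ne_zero (R : Type*) [CommRing R] [Nontrivial R]
    (n : ℕ) : Module.finrank R
      (restrictSupport R {d : σ →₀ ℕ | d.degree = n + Fintype.card σ ∧ ∀ i, d i ≠ 0}) =
      (Fintype.card σ).multichoose n := by
  rw [finrank_restrictSupport, setOf_degree_eq_and_forall_ne_zero,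
    Set.ncard_image_of_injective _ (add_right_injective _), ncard_setOf_degree_eq]

lemma restrictSupport_degree_eq_and_forall_ne_zero (R : Type*) [CommSemiring R] (n : ℕ) :
    restrictSupport R {d : σ →₀ ℕ | d.degree = n + Fintype.card σ ∧ ∀ i, d i ≠ 0} =
      Submodule.span R {p | ∃ d : σ →₀ ℕ, d.degree = n ∧ p = (∏ i, X i) * monomial d 1} := by
  rw [restrictSupport_eq_span, setOf_degree_eq_and_forall_ne_zero, Set.image_image]
  congr 1
  ext p
  have hmul : ∀ d : σ →₀ ℕ, (∏ i, X i) * monomial d 1 =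
      monomial ((∑ i, Finsupp.single i 1) + d) (1 : R) := fun d ↦ by
    rw [← mul_one (1 : R), ← monomial_mul, monomial_sum_one, mul_one]
    rfl
  simp only [hmul, Set.mem_image, Set.mem_ofPred_eq, eq_comm (a := p)]

end Monomials

/-- Forms of degree `n` vanishing at every point of `Z`. -/
noncomputable def vanishingForms {σ R : Type*} [CommSemiring R] (Z : Set (σ → R)) (n : ℕ) :
    Submodule R (MvPolynomial σ R) :=
  homogeneousSubmodule σ R n ⊓ ⨅ v ∈ Z, LinearMap.ker (aeval (R := R) v).toLinearMap

lemma mem_vanishingForms {σ R : Type*} [CommSemiring R] {Z : Set (σ → R)} {n : ℕ}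
    {f : MvPolynomial σ R} :
    f ∈ vanishingForms Z n ↔ f.IsHomogeneous n ∧ ∀ v ∈ Z, aeval v f = 0 := by
  simp [vanishingForms, Submodule.mem_iInf]

section FermatConfiguration

variable {R : Type*} [CommRing R] {K : Type*} [Field K]

/-- The Fermat configuration with the coordinate points added, with the edges of the coordinate
triangle indexed by the opposite vertex `i` and oriented from `e_{i+1}` to `e_{i+2}`, indices being
taken modulo `3`. -/
def fermatPoints (R : Type*) [CommRing R] (m : ℕ) : Set (Fin 3 → R) :=
  Set.range (fun i ↦ Pi.single i 1) ∪
    {v | ∃ (i : Fin 3) (t : R), t ^ m = (-1) ^ m ∧ v = edgePoint (i + 1) (i + 2) t}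

/-- The forms `G_x`, `G_y`, `G_z` as a family indexed by `ℤ/3`. -/
noncomputable def fermatForm (R : Type*) [CommRing R] (m : ℕ) (i : Fin 3) :
    MvPolynomial (Fin 3) R :=
  X (i + 1) * X (i + 2) * (X (i + 1) ^ m - (-X (i + 2)) ^ m)

/-- Simultaneous restriction to the three edges of the coordinate triangle. -/
noncomputable def triangleRestriction (R : Type*) [CommSemiring R] :
    MvPolynomial (Fin 3) R →ₗ[R] Fin 3 → R[X] :=
  LinearMap.pi fun i ↦ (edgeRestriction (i + 1) (i + 2)).toLinearMap

lemma triangleRestriction_apply {R : Type*} [CommSemiring R] (f : MvPolynomial (Fin 3) R)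
    (i : Fin 3) : triangleRestriction R f i = edgeRestriction (i + 1) (i + 2) f := rfl

lemma triangleRestriction_fermatForm (m : ℕ) (i : Fin 3) :
    triangleRestriction R (fermatForm R m i) = Pi.single i (fermatEdge R m) := by
  ext1 k
  fin_cases i <;> fin_cases k <;>
    simp [triangleRestriction_apply, fermatForm, fermatEdge, edgeRestriction, edgePoint]

lemma isHomogeneous_fermatForm (m : ℕ) (i : Fin 3) :
    (fermatForm R m i).IsHomogeneous (m + 2) := by
  have hX : ∀ j : Fin 3, (X j : MvPolynomial (Fin 3) R).IsHomogeneous 1 := isHomogeneous_X R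
  have hpow : (X (i + 1) ^ m - (-X (i + 2)) ^ m : MvPolynomial (Fin 3) R).IsHomogeneous (1 * m) :=
    ((hX _).pow m).sub ((hX _).neg.pow m)
  have hdeg : 1 + 1 + 1 * m = m + 2 := by ring
  exact hdeg ▸ ((hX (i + 1)).mul (hX (i + 2))).mul hpow

lemma forall_mem_fermatPoints_iff [IsDomain R] {m : ℕ} {P : (Fin 3 → R) → Prop} :
    (∀ v ∈ fermatPoints R m, P v) ↔
      ∀ i t, (fermatEdge R m).IsRoot t → P (edgePoint (i + 1) (i + 2) t) := by
  have hvertex : ∀ i : Fin 3, edgePoint (i + 1) (i + 2) (0 : R) = Pi.single (i + 1) 1 :=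
    fun i ↦ by simp [edgePoint]
  simp only [isRoot_fermatEdge_iff]
  constructor
  · rintro h i t (rfl | ht)
    · exact h _ (Or.inl ⟨i + 1, (hvertex i).symm⟩)
    · exact h _ (Or.inr ⟨i, t, ht, rfl⟩)
  · rintro h _ (⟨i, rfl⟩ | ⟨i, t, ht, rfl⟩)
    · have hi := h (i - 1) 0 (Or.inl rfl)
      rwa [hvertex, sub_add_cancel] at hi
    · exact h i t (Or.inr ht)

lemma mem_vanishingForms_fermatPoints_iff {m : ℕ} (hm : m ≠ 0) {ζ : K} (hζ : IsPrimitiveRoot ζ m)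
    {f : MvPolynomial (Fin 3) K} :
    f ∈ vanishingForms (fermatPoints K m) (m + 2) ↔ f.IsHomogeneous (m + 2) ∧
      ∃ c : Fin 3 → K, triangleRestriction K f = fun i ↦ c i • fermatEdge K m := by
  rw [mem_vanishingForms]
  refine and_congr_right fun hf ↦ ⟨fun hv ↦ ?_, ?_⟩
  · have hvertex : ∀ i : Fin 3, aeval (Pi.single i 1 : Fin 3 → K) f = 0 := fun i ↦
      hv _ (Or.inl ⟨i, rfl⟩)
    have hroot := forall_mem_fermatPoints_iff.mp hv
    simp only [← eval_edgeRestriction] at hroot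
    have hedge : ∀ i : Fin 3, ∃ c : K, triangleRestriction K f i = c • fermatEdge K m := fun i ↦
      exists_eq_smul_of_splits_of_nodup_roots (fermatEdge_ne_zero hm) (splits_fermatEdge hζ)
        (nodup_roots_fermatEdge hm hζ)
        ((natDegree_edgeRestriction_le_of_aeval_single_eq_zero (by simp) hf
          (hvertex _)).trans_eq (natDegree_fermatEdge hm).symm) (hroot i)
    choose c hc using hedge
    exact ⟨c, funext hc⟩
  · rintro ⟨c, hc⟩
    refine forall_mem_fermatPoints_iff.mpr fun i t ht ↦ ?_
    rw [← eval_edgeRestriction, ← triangleRestriction_apply, hc, Polynomial.eval_smul, ht,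
      smul_zero]

lemma mem_restrictSupport_iff_triangleRestriction_eq_zero {R : Type*} [CommSemiring R]
    {n : ℕ} {f : MvPolynomial (Fin 3) R} :
    f ∈ restrictSupport R {d | d.degree = n ∧ ∀ i, d i ≠ 0} ↔
      f.IsHomogeneous n ∧ triangleRestriction R f = 0 := by
  have hedge : ∀ (d : Fin 3 →₀ ℕ) (i : Fin 3), d.support ⊆ {i + 1, i + 2} ↔ d i = 0 := by
    intro d i
    have hcompl : ({i + 1, i + 2} : Finset (Fin 3)) = {i}ᶜ := by decide +revert
    rw [hcompl, Finset.subset_compl_singleton, Finsupp.notMem_support_iff]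
  have hhom : f.IsHomogeneous n ↔ ∀ d ∈ f.support, d.degree = n := by
    rw [← mem_homogeneousSubmodule, homogeneousSubmodule_eq_finsupp_supported]
    rfl
  have hsupp : f ∈ restrictSupport R {d | d.degree = n ∧ ∀ i, d i ≠ 0} ↔
      f.IsHomogeneous n ∧ ∀ i, ∀ d ∈ f.support, d i ≠ 0 := by
    rw [hhom, mem_restrictSupport_iff]
    exact ⟨fun h ↦ ⟨fun d hd ↦ (h hd).1, fun i d hd ↦ (h hd).2 i⟩,
      fun h d hd ↦ ⟨h.1 d hd, fun i ↦ h.2 i d hd⟩⟩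
  rw [hsupp, _root_.funext_iff]
  refine and_congr_right fun hf ↦ forall_congr' fun i ↦ ?_
  have hi : i + 1 ≠ i + 2 := by simp
  rw [triangleRestriction_apply, Pi.zero_apply, edgeRestriction_eq_zero_iff hi hf]
  simp only [hedge]

lemma linearIndependent_triangleRestriction_fermatForm [IsDomain R] {m : ℕ} (hm : m ≠ 0) :
    LinearIndependent R (triangleRestriction R ∘ fermatForm R m) := by
  have hsingle : triangleRestriction R ∘ fermatForm R m =
      fun i ↦ Pi.single i (fermatEdge R m) := funext (triangleRestriction_fermatForm m)
  rw [hsingle]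
  exact Pi.linearIndependent_single_of_ne_zero fun _ ↦ fermatEdge_ne_zero hm

lemma vanishingForms_fermatPoints_eq_sup {m : ℕ} (hm : m ≠ 0) {ζ : K} (hζ : IsPrimitiveRoot ζ m) :
    vanishingForms (fermatPoints K m) (m + 2) =
      Submodule.span K (Set.range (fermatForm K m)) ⊔
        restrictSupport K {d | d.degree = m + 2 ∧ ∀ i, d i ≠ 0} := by
  apply le_antisymm
  · intro f hfmem
    obtain ⟨hf, c, hc⟩ := (mem_vanishingForms_fermatPoints_iff hm hζ).mp hfmem
    set g := ∑ i, c i • fermatForm K m i with hg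
    have hghom : g.IsHomogeneous (m + 2) := IsHomogeneous.sum _ _ _ fun i _ ↦
      (homogeneousSubmodule _ K _).smul_mem _ (isHomogeneous_fermatForm m i)
    have hgspan : g ∈ Submodule.span K (Set.range (fermatForm K m)) := Submodule.sum_mem _ fun i _ ↦
      Submodule.smul_mem _ _ (Submodule.subset_span ⟨i, rfl⟩)
    have hgrestr : triangleRestriction K g = triangleRestriction K f := by
      rw [hg, hc, map_sum]
      simp only [map_smul, triangleRestriction_fermatForm, ← Pi.single_smul]
      exact Finset.univ_sum_single _
    rw [← add_sub_cancel g f]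
    refine Submodule.add_mem_sup hgspan
      (mem_restrictSupport_iff_triangleRestriction_eq_zero.mpr ⟨hf.sub hghom, ?_⟩)
    rw [map_sub, hgrestr, sub_self]
  · refine sup_le (Submodule.span_le.mpr ?_) fun f hf ↦ ?_
    · rintro _ ⟨i, rfl⟩
      refine (mem_vanishingForms_fermatPoints_iff hm hζ).mpr
        ⟨isHomogeneous_fermatForm m i, Pi.single i 1, ?_⟩
      ext1 k
      rw [triangleRestriction_fermatForm]
      by_cases hk : k = i <;> simp [hk]
    · obtain ⟨hfhom, hf0⟩ := mem_restrictSupport_iff_triangleRestriction_eq_zero.mp hf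
      exact (mem_vanishingForms_fermatPoints_iff hm hζ).mpr ⟨hfhom, 0, by rw [hf0]; ext1 i; simp⟩

lemma disjoint_span_fermatForm_restrictSupport [IsDomain R] {m : ℕ} (hm : m ≠ 0) :
    Disjoint (Submodule.span R (Set.range (fermatForm R m)))
      (restrictSupport R {d | d.degree = m + 2 ∧ ∀ i, d i ≠ 0}) :=
  (Submodule.range_ker_disjoint (linearIndependent_triangleRestriction_fermatForm hm)).mono_right
    fun _ hf ↦ (mem_restrictSupport_iff_triangleRestriction_eq_zero.mp hf).2

lemma finrank_span_fermatForm [IsDomain R] {m : ℕ} (hm : m ≠ 0) :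
    Module.finrank R (Submodule.span R (Set.range (fermatForm R m))) = 3 := by
  rw [finrank_span_eq_card (linearIndependent_triangleRestriction_fermatForm hm).of_comp,
    Fintype.card_fin]

lemma finrank_vanishingForms_fermatPoints {m : ℕ} (hm : m ≠ 0) {ζ : K}
    (hζ : IsPrimitiveRoot ζ m) :
    Module.finrank K (vanishingForms (fermatPoints K m) (m + 2)) =
      3 + Module.finrank K
        (restrictSupport K {d : Fin 3 →₀ ℕ | d.degree = m + 2 ∧ ∀ i, d i ≠ 0}) := by
  have : FiniteDimensional K (homogeneousSubmodule (Fin 3) K (m + 2)) :=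
    Module.Finite.iff_fg.mpr (homogeneousSubmodule_fg _ _ _)
  have hle : restrictSupport K {d | d.degree = m + 2 ∧ ∀ i, d i ≠ 0} ≤
      homogeneousSubmodule (Fin 3) K (m + 2) := fun _ hf ↦
    (mem_restrictSupport_iff_triangleRestriction_eq_zero.mp hf).1
  have : FiniteDimensional K
      (restrictSupport K {d : Fin 3 →₀ ℕ | d.degree = m + 2 ∧ ∀ i, d i ≠ 0}) :=
    Submodule.finiteDimensional_of_le hle
  have : FiniteDimensional K (Submodule.span K (Set.range (fermatForm K m))) :=
    FiniteDimensional.span_of_finite K (Set.finite_range _)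
  have hsup := Submodule.finrank_sup_add_finrank_inf_eq
    (Submodule.span K (Set.range (fermatForm K m)))
    (restrictSupport K {d | d.degree = m + 2 ∧ ∀ i, d i ≠ 0})
  rwa [← vanishingForms_fermatPoints_eq_sup hm hζ,
    (disjoint_span_fermatForm_restrictSupport hm).eq_bot, finrank_bot, add_zero,
    finrank_span_fermatForm hm] at hsup

theorem Fermat_degree_m_plus_two_space_general {m : ℕ} (hm : m ≠ 0) {ζ : K}
    (hζ : IsPrimitiveRoot ζ m) :
    Module.finrank K (vanishingForms (fermatPoints K m) (m + 2)) = m * (m + 1) / 2 + 3 ∧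
    vanishingForms (fermatPoints K m) (m + 2) = Submodule.span K
      (Set.range (fermatForm K m) ∪
        {p | ∃ d : Fin 3 →₀ ℕ, d.degree = m - 1 ∧ p = (∏ i, X i) * monomial d 1}) := by
  obtain ⟨n, rfl⟩ : ∃ n, m = n + 1 := Nat.exists_eq_succ_of_ne_zero hm
  constructor
  · have hinterior : Module.finrank K (restrictSupport K
        {d : Fin 3 →₀ ℕ | d.degree = n + 1 + 2 ∧ ∀ i, d i ≠ 0}) = (n + 1) * (n + 2) / 2 :=
      (finrank_restrictSupport_degree_eq_and_forall_ne_zero K n).trans (multichoose_three n)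
    rw [finrank_vanishingForms_fermatPoints hm hζ, hinterior, add_comm]
  · rw [vanishingForms_fermatPoints_eq_sup hm hζ, Submodule.span_union]
    exact congrArg _ (restrictSupport_degree_eq_and_forall_ne_zero K n)

end FermatConfiguration

lemma range_fin_three {α : Type*} (f : Fin 3 → α) : Set.range f = {f 0, f 1, f 2} := by
  simp [Set.ext_iff, Fin.exists_fin_succ, eq_comm]

lemma Zm3_eq_fermatPoints (m : ℕ) : Zm3 m = fermatPoints ℂ m := by
  have hvertices : ({![1, 0, 0], ![0, 1, 0], ![0, 0, 1]} : Set (Fin 3 → ℂ)) =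
      Set.range fun i ↦ Pi.single i 1 := by
    rw [range_fin_three]
    congr! <;> ext k <;> fin_cases k <;> simp
  have hedge : ∀ t : ℂ, edgePoint (0 + 1) (0 + 2) t = ![0, 1, t] ∧
      edgePoint (1 + 1) (1 + 2) t = ![t, 0, 1] ∧ edgePoint (2 + 1) (2 + 2) t = ![1, t, 0] :=
    fun t ↦ by
      refine ⟨?_, ?_, ?_⟩ <;> ext k <;> fin_cases k <;> simp [edgePoint]
  rw [Zm3, fermatPoints, hvertices]
  congr 1
  ext v
  constructor
  · rintro ⟨t, ht, rfl | rfl | rfl⟩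
    · exact ⟨2, t, ht, (hedge t).2.2.symm⟩
    · exact ⟨0, t, ht, (hedge t).1.symm⟩
    · exact ⟨1, t, ht, (hedge t).2.1.symm⟩
  · rintro ⟨i, t, ht, rfl⟩
    refine ⟨t, ht, ?_⟩
    fin_cases i
    · exact Or.inr (Or.inl (hedge t).1)
    · exact Or.inr (Or.inr (hedge t).2.1)
    · exact Or.inl (hedge t).2.2

lemma range_fermatForm (m : ℕ) : Set.range (fermatForm ℂ m) = {Gx m, Gy m, Gz m} :=
  range_fin_three _

lemma setOf_prod_X_mul_monomial (R : Type*) [CommSemiring R] (n : ℕ) :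
    {p : MvPolynomial (Fin 3) R | ∃ d : Fin 3 →₀ ℕ, d.degree = n ∧
      p = (∏ i, X i) * monomial d 1} =
    {p | ∃ i j k : ℕ, i + j + k = n ∧ p = X 0 * X 1 * X 2 * (X 0 ^ i * X 1 ^ j * X 2 ^ k)} := by
  have hdegree : ∀ d : Fin 3 →₀ ℕ, d.degree = d 0 + d 1 + d 2 := fun d ↦ by
    rw [Finsupp.degree_eq_sum, Fin.sum_univ_three]
  have hmonomial : ∀ d : Fin 3 →₀ ℕ, monomial d (1 : R) = X 0 ^ d 0 * X 1 ^ d 1 * X 2 ^ d 2 :=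
    fun d ↦ by
      rw [monomial_eq, Finsupp.prod_fintype _ _ (by simp), Fin.prod_univ_three, C_1, one_mul]
  ext p
  simp only [hdegree, hmonomial, Fin.prod_univ_three]
  constructor
  · rintro ⟨d, hd, rfl⟩
    exact ⟨d 0, d 1, d 2, hd, rfl⟩
  · rintro ⟨i, j, k, hn, rfl⟩
    exact ⟨Finsupp.equivFunOnFinite.symm ![i, j, k], hn, rfl⟩

/-- The space of homogeneous degree-`(m+2)` polynomials vanishing on `Z(F_{m,3})` has
dimension `m(m+1)/2 + 3` and is spanned by `G_x, G_y, G_z` together with the products of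
`xyz` with all monomials of degree `m−1`. -/
theorem Fermat_degree_m_plus_two_space (m : ℕ) (hm : 2 ≤ m) :
    Module.finrank ℂ (Vm3 m) = m * (m + 1) / 2 + 3 ∧
    Vm3 m = Submodule.span ℂ
      ({Gx m, Gy m, Gz m} ∪
        {p | ∃ i j k : ℕ, i + j + k = m - 1 ∧
          p = X 0 * X 1 * X 2 * ((X 0) ^ i * (X 1) ^ j * (X 2) ^ k)}) := by
  have hV : Vm3 m = vanishingForms (fermatPoints ℂ m) (m + 2) := by
    rw [← Zm3_eq_fermatPoints]
    rfl
  rw [hV, ← range_fermatForm, ← setOf_prod_X_mul_monomial]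
  exact Fermat_degree_m_plus_two_space_general (by omega)
    (Complex.isPrimitiveRoot_exp m (by omega))
end
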